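/- Let X be a compact Kähler manifold and α ∈ H^{1,1}(X,ℝ) a big cohomology class with smooth representative θ. If there exists an exponentially continuous θ-plurisubharmonic function with minimal singularities, then P(α) = NB(α). -/

import Mathlib

open Topology Filter Set

/-- The exponential of an extended real number, with the convention
`e^{-∞} = 0` (the value at `+∞` is irrelevant here since quasi-psh functions
take values in `ℝ ∪ {-∞}`). -/
noncomputable def expE : EReal → ℝ := fun t => if t = ⊥ then 0 else Real.exp t.toReal

/-- Abstract setting for pluripotential theory on a compact Kähler manifold `X`
of complex dimension `n`, endowed with a fixed smooth closed real `(1,1)`-form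
`θ` representing a *big* cohomology class `α ∈ H^{1,1}(X,ℝ)`.

Since Mathlib does not yet have complex manifolds, Kähler forms, positive
currents, or the `dd^c` operator, the set `PSH(X,θ)` of `θ`-plurisubharmonic
functions (functions `φ : X → ℝ ∪ {-∞}` which are locally the sum of a smooth
and a plurisubharmonic function and satisfy `θ + dd^c φ ≥ 0` as currents) is
given abstractly, together with its standard basic properties.  Bigness of `α`
is recorded through the ample locus `Amp(α)` and Boucksom's Kähler current with
analytic singularities whose singular set is exactly `X \ Amp(α)`. -/
structure BigClassSetting (X : Type*) [TopologicalSpace X] [CompactSpace X] where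
  /-- the complex dimension of `X` -/
  n : ℕ
  npos : 0 < n
  /-- `PSH φ` means `φ ∈ PSH(X,θ)`. -/
  PSH : (X → EReal) → Prop
  psh_nonempty : ∃ φ, PSH φ
  psh_usc : ∀ φ, PSH φ → UpperSemicontinuous φ
  psh_ne_top : ∀ φ, PSH φ → ∀ x, φ x ≠ ⊤
  psh_max : ∀ φ ψ, PSH φ → PSH ψ → PSH fun x => max (φ x) (ψ x)
  psh_add_const : ∀ φ (c : ℝ), PSH φ → PSH fun x => φ x + (c : EReal)
  /-- the extremal function `V_θ = sup{v ∈ PSH(X,θ) : v ≤ 0}` is `θ`-psh. -/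
  psh_V : PSH fun x => ⨆ ψ ∈ {ψ : X → EReal | PSH ψ ∧ ∀ y, ψ y ≤ 0}, ψ x
  /-- the ample locus `Amp(α)` of the big class `α`: the Zariski open set of
  points at which some Kähler current in `α` with analytic singularities is
  smooth. -/
  ample : Set X
  ample_open : IsOpen ample
  ample_nonempty : ample.Nonempty
  /-- `α` is big: by Boucksom there is a Kähler current `T₀ = θ + dd^c ψ₀` in
  `α` with analytic singularities and `Amp(α) = X \ Sing T₀`; its potential
  `ψ₀` is `θ`-psh, nonpositive, exponentially continuous, and equal to `-∞`
  exactly outside the ample locus. -/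
  bigWitness : ∃ ψ₀, PSH ψ₀ ∧ (∀ x, ψ₀ x ≤ 0) ∧
    Continuous (fun x => expE (ψ₀ x)) ∧ ∀ x, ψ₀ x = ⊥ ↔ x ∉ ample

namespace BigClassSetting

variable {X : Type*} [TopologicalSpace X] [CompactSpace X]

/-- The extremal function `V_θ := sup{v ∈ PSH(X,θ) : sup_X v ≤ 0}`. -/
noncomputable def V (S : BigClassSetting X) : X → EReal :=
  fun x => ⨆ ψ ∈ {ψ : X → EReal | S.PSH ψ ∧ ∀ y, ψ y ≤ 0}, ψ x

/-- The polar locus `P(α) := {x ∈ X : V_θ(x) = -∞}`. -/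
def polar (S : BigClassSetting X) : Set X := {x | S.V x = ⊥}

/-- The non-bounded locus `NB(α) := {x ∈ X : V_θ ∉ L^∞_loc({x})}`. -/
def NB (S : BigClassSetting X) : Set X :=
  {x | ¬ ∃ U ∈ 𝓝 x, ∃ C : ℝ, ∀ y ∈ U, (-C : ℝ) ≤ S.V y}

/-- `φ` has minimal singularities: every `ψ ∈ PSH(X,θ)` satisfies `ψ ≤ φ + C`
for some constant `C`. -/
def MinSing (S : BigClassSetting X) (φ : X → EReal) : Prop :=
  ∀ ψ, S.PSH ψ → ∃ C : ℝ, ∀ x, ψ x ≤ φ x + (C : EReal)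

end BigClassSetting

/-!
Any two `θ`-psh functions with minimal singularities differ by a bounded amount, so they have the
same `-∞` locus and the same non-bounded locus. Since `V_θ` is one of them, both loci of `α` can be
computed on the exponentially continuous one, `φ`: where `φ x ≠ -∞`, the continuous function `e^φ`
is bounded below by a positive constant near `x`, hence `φ` is locally bounded at `x`.
-/

theorem expE_pos {t : EReal} (ht : t ≠ ⊥) : 0 < expE t := by
  simpa only [expE, if_neg ht] using Real.exp_pos t.toReal

theorem expE_le_exp_of_le_coe {t : EReal} {a : ℝ} (h : t ≤ a) : expE t ≤ Real.exp a := by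
  by_cases ht : t = ⊥
  · simpa only [expE, if_pos ht] using (Real.exp_pos a).le
  · simpa only [expE, if_neg ht, Real.exp_le_exp, EReal.toReal_coe] using
      EReal.toReal_le_toReal h ht (EReal.coe_ne_top a)

/-- `f` is more singular than `g`, that is, `f ≤ g + O(1)`. By unfolding, `S.MinSing φ` says that
every `θ`-psh function is more singular than `φ`. -/
def MoreSingular {X : Type*} (f g : X → EReal) : Prop :=
  ∃ C : ℝ, ∀ x, f x ≤ g x + (C : EReal)

/-- The non-bounded locus of `f`, the points near which `f` has no finite lower bound. Upper bounds
are not required, as quasi-psh functions are always locally bounded above. -/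
def nonBoundedLocus {X : Type*} [TopologicalSpace X] (f : X → EReal) : Set X :=
  {x | ¬ ∃ a : ℝ, ∀ᶠ y in 𝓝 x, (a : EReal) ≤ f y}

theorem MoreSingular.preimage_bot_subset {X : Type*} {f g : X → EReal} (h : MoreSingular f g) :
    g ⁻¹' {⊥} ⊆ f ⁻¹' {⊥} := by
  obtain ⟨C, hC⟩ := h
  intro x (hx : g x = ⊥)
  exact le_bot_iff.1 (by simpa only [hx, EReal.bot_add] using hC x)

section TopologicalSpace

variable {X : Type*} [TopologicalSpace X]

theorem MoreSingular.nonBoundedLocus_subset {f g : X → EReal} (h : MoreSingular f g) :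
    nonBoundedLocus g ⊆ nonBoundedLocus f := by
  obtain ⟨C, hC⟩ := h
  rintro x hx ⟨a, ha⟩
  refine hx ⟨a - C, ha.mono fun y hy => ?_⟩
  rw [EReal.coe_sub]
  exact EReal.sub_le_of_le_add (hy.trans (hC y))

theorem preimage_bot_subset_nonBoundedLocus (f : X → EReal) :
    f ⁻¹' {⊥} ⊆ nonBoundedLocus f := by
  rintro x (hx : f x = ⊥) ⟨a, ha⟩
  exact EReal.coe_ne_bot a (le_bot_iff.1 (hx ▸ ha.self_of_nhds))

theorem exists_eventually_coe_le_of_lowerSemicontinuousAt_expE {f : X → EReal} {x : X}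
    (hf : LowerSemicontinuousAt (fun y => expE (f y)) x) (hx : f x ≠ ⊥) :
    ∃ a : ℝ, ∀ᶠ y in 𝓝 x, (a : EReal) ≤ f y := by
  obtain ⟨ε, hε, hεx⟩ := exists_between (expE_pos hx)
  refine ⟨Real.log ε, (hf ε hεx).mono fun y hy => ?_⟩
  by_contra! hlt
  have hle : expE (f y) ≤ ε := by
    simpa only [Real.exp_log hε] using expE_le_exp_of_le_coe hlt.le
  exact hy.not_ge hle

theorem nonBoundedLocus_eq_preimage_bot {f : X → EReal}
    (hf : LowerSemicontinuous fun x => expE (f x)) : nonBoundedLocus f = f ⁻¹' {⊥} :=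
  Subset.antisymm
    (fun x hx => not_not.1 fun hbot =>
      hx (exists_eventually_coe_le_of_lowerSemicontinuousAt_expE (hf x) hbot))
    (preimage_bot_subset_nonBoundedLocus f)

theorem exists_forall_le_coe_of_upperSemicontinuous [CompactSpace X] {f : X → EReal}
    (hf : UpperSemicontinuous f) (htop : ∀ x, f x ≠ ⊤) : ∃ M : ℝ, ∀ x, f x ≤ M := by
  obtain hX | hX := isEmpty_or_nonempty X
  · exact ⟨0, hX.elim⟩
  obtain ⟨x₀, -, hx₀⟩ :=
    (hf.upperSemicontinuousOn univ).exists_isMaxOn univ_nonempty isCompact_univ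
  exact ⟨(f x₀).toReal, fun x => (hx₀ (mem_univ x)).trans (EReal.le_coe_toReal (htop x₀))⟩

end TopologicalSpace

namespace BigClassSetting

variable {X : Type*} [TopologicalSpace X] [CompactSpace X] {S : BigClassSetting X}

theorem le_V {ψ : X → EReal} (hψ : S.PSH ψ) (hψ0 : ∀ y, ψ y ≤ 0) (x : X) : ψ x ≤ S.V x :=
  le_iSup₂ (f := fun (v : X → EReal) (_ : v ∈ {v | S.PSH v ∧ ∀ y, v y ≤ 0}) => v x) ψ ⟨hψ, hψ0⟩

theorem minSing_V (S : BigClassSetting X) : S.MinSing S.V := by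
  intro ψ hψ
  obtain ⟨M, hM⟩ := exists_forall_le_coe_of_upperSemicontinuous (S.psh_usc ψ hψ) (S.psh_ne_top ψ hψ)
  have hshift : ∀ y, ψ y + ((-M : ℝ) : EReal) = ψ y - (M : EReal) := fun y => by
    rw [EReal.coe_neg, sub_eq_add_neg]
  have hnonpos : ∀ y, ψ y + ((-M : ℝ) : EReal) ≤ 0 := fun y => by
    rw [hshift]
    exact EReal.sub_nonpos.2 (hM y)
  refine ⟨M, fun x => ?_⟩
  have hle := le_V (S.psh_add_const ψ (-M) hψ) hnonpos x
  rw [hshift] at hle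
  exact (EReal.sub_le_iff_le_add (.inl (EReal.coe_ne_bot M)) (.inl (EReal.coe_ne_top M))).1 hle

theorem NB_eq_nonBoundedLocus_V (S : BigClassSetting X) : S.NB = nonBoundedLocus S.V := by
  ext x
  refine not_congr ⟨?_, ?_⟩
  · rintro ⟨U, hU, C, hC⟩
    exact ⟨-C, mem_of_superset hU hC⟩
  · rintro ⟨a, ha⟩
    exact ⟨_, ha, -a, fun y hy => by simpa only [neg_neg, mem_ofPred_eq] using hy⟩

theorem MinSing.polar_eq {φ : X → EReal} (hmin : S.MinSing φ) (hφ : S.PSH φ) :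
    S.polar = φ ⁻¹' {⊥} :=
  Subset.antisymm (MoreSingular.preimage_bot_subset (S.minSing_V φ hφ))
    (MoreSingular.preimage_bot_subset (hmin S.V S.psh_V))

theorem MinSing.NB_eq {φ : X → EReal} (hmin : S.MinSing φ) (hφ : S.PSH φ) :
    S.NB = nonBoundedLocus φ := by
  rw [NB_eq_nonBoundedLocus_V]
  exact Subset.antisymm (MoreSingular.nonBoundedLocus_subset (S.minSing_V φ hφ))
    (MoreSingular.nonBoundedLocus_subset (hmin S.V S.psh_V))

end BigClassSetting

/-- If the big class `α` contains an exponentially continuous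
`θ`-plurisubharmonic function with minimal singularities, then the polar locus
`P(α)` coincides with the non-bounded locus `NB(α)`. -/
theorem polar_eq_NB_of_expCont_minSing
    {X : Type*} [TopologicalSpace X] [CompactSpace X] [Nonempty X]
    (S : BigClassSetting X)
    (h : ∃ φ : X → EReal, S.PSH φ ∧ S.MinSing φ ∧ Continuous fun x => expE (φ x)) :
    S.polar = S.NB := by
  obtain ⟨φ, hφ, hmin, hcont⟩ := h
  calc S.polar = φ ⁻¹' {⊥} := hmin.polar_eq hφ
    _ = nonBoundedLocus φ := (nonBoundedLocus_eq_preimage_bot hcont.lowerSemicontinuous).symm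
    _ = S.NB := (hmin.NB_eq hφ).symm
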